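/- arXiv:2510.07605 — 2 statements merged into one kernel-verified Lean document; each statement's English description precedes it below -/
import Mathlib

section
/- Let α ∈ (1,∞) and let D ∈ M_n(ℂ) be positive semidefinite with tr D = 1. Then tr(D^α) equals the maximum, over all finite resolutions of identity (p_1,…,p_k) in M_n(ℂ), of Σ_{i=1}^k (tr(p_i D))^α / (tr(p_i))^{α−1}. Consequently, the Rényi entropy R_α := (1/(α−1)) log tr(D^α) satisfies R_α = (1/(α−1)) · max over such resolutions of log Σ_{i=1}^k (tr(p_i D))^α / (tr(p_i))^{α−1}. -/
open scoped Matrix ComplexOrder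

/-!
The spectral projections `e_j` of `D` attain the value `∑ λ_j ^ α`. Conversely, given a resolution
of identity `p`, the numbers `w_ij = tr (p_i e_j)` are nonnegative with `∑_i w_ij = tr e_j = 1`, and
`tr p_i = ∑_j w_ij`, `tr (p_i D) = ∑_j w_ij λ_j`. The power mean inequality with weights `w_i` gives
`tr (p_i D) ^ α / (tr p_i) ^ (α - 1) ≤ ∑_j w_ij λ_j ^ α`, and summing over `i` bounds the Rényi sum
by `∑_j λ_j ^ α`.
-/

theorem rpow_sum_mul_div_rpow_sum_le {ι : Type*} (s : Finset ι) {α : ℝ} (hα : 1 ≤ α) (w x : ι → ℝ)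
    (hw : ∀ j, 0 ≤ w j) (hx : ∀ j, 0 ≤ x j) :
    (∑ j ∈ s, w j * x j) ^ α / (∑ j ∈ s, w j) ^ (α - 1) ≤ ∑ j ∈ s, w j * x j ^ α := by
  have hα0 : α ≠ 0 := by linarith
  have hW : 0 ≤ ∑ j ∈ s, w j := Finset.sum_nonneg fun j _ => hw j
  have hwx : 0 ≤ ∑ j ∈ s, w j * x j := Finset.sum_nonneg fun j _ => mul_nonneg (hw j) (hx j)
  have hR : 0 ≤ ∑ j ∈ s, w j * x j ^ α :=
    Finset.sum_nonneg fun j _ => mul_nonneg (hw j) (Real.rpow_nonneg (hx j) α)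
  refine div_le_of_le_mul₀ (Real.rpow_nonneg hW _) hR ?_
  calc (∑ j ∈ s, w j * x j) ^ α
      ≤ ((∑ j ∈ s, w j) ^ (1 - α⁻¹) * (∑ j ∈ s, w j * x j ^ α) ^ α⁻¹) ^ α :=
        Real.rpow_le_rpow hwx (Real.inner_le_weight_mul_Lp_of_nonneg s hα w x hw hx) (by linarith)
    _ = (∑ j ∈ s, w j) ^ (α - 1) * ∑ j ∈ s, w j * x j ^ α := by
        rw [Real.mul_rpow (by positivity) (by positivity), ← Real.rpow_mul hW,
          Real.rpow_inv_rpow hR hα0, sub_mul, one_mul, inv_mul_cancel₀ hα0]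
    _ = (∑ j ∈ s, w j * x j ^ α) * (∑ j ∈ s, w j) ^ (α - 1) := mul_comm _ _

variable {𝕜 ι κ : Type*} [RCLike 𝕜] [Fintype ι] {A B D : Matrix ι ι 𝕜}

open scoped MatrixOrder in
theorem trace_mul_nonneg_of_posSemidef (hA : A.PosSemidef) (hB : B.PosSemidef) :
    0 ≤ (A * B).trace := by
  classical
  set S := CFC.sqrt B
  have hS : Sᴴ = S := (Matrix.nonneg_iff_posSemidef.1 (CFC.sqrt_nonneg B)).isHermitian
  have hSS : S * S = B := CFC.sqrt_mul_sqrt_self B hB.nonneg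
  have htrace : (A * B).trace = (S * A * Sᴴ).trace := by
    rw [Matrix.trace_mul_cycle, hS, hSS, Matrix.trace_mul_comm]
  exact htrace ▸ (hA.mul_mul_conjTranspose_same S).trace_nonneg

theorem posSemidef_of_isHermitian_of_isIdempotentElem (hA : A.IsHermitian)
    (hA' : IsIdempotentElem A) : A.PosSemidef := by
  simpa only [hA.eq, hA'.eq] using Matrix.posSemidef_conjTranspose_mul_self A

theorem re_trace_pos_of_posSemidef (hA : A.PosSemidef) (hA0 : A ≠ 0) :
    0 < RCLike.re A.trace :=
  (RCLike.pos_iff.1 (hA.trace_nonneg.lt_of_ne' (mt hA.trace_eq_zero_iff.1 hA0))).1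

variable [Fintype κ] {p : κ → Matrix ι ι 𝕜} {α : ℝ}

/-- The sum `∑ i, tr (p i * D) ^ α / tr (p i) ^ (α - 1)` maximised in the variational formula. The
real parts lose nothing for positive semidefinite matrices, whose traces are real; a zero matrix
`p i` contributes `0`, provided `α ≠ 0`. -/
noncomputable def renyiSum (α : ℝ) (D : Matrix ι ι 𝕜) (p : κ → Matrix ι ι 𝕜) : ℝ :=
  ∑ i, RCLike.re (p i * D).trace ^ α / RCLike.re (p i).trace ^ (α - 1)

variable [DecidableEq ι]

section Eigenprojection

/-- The orthogonal projection onto the line spanned by the `j`-th vector of the eigenbasis of a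
Hermitian matrix chosen by Mathlib. Repeated eigenvalues give several such projections, which are
not collected into one projection per eigenvalue. -/
noncomputable def eigenprojection (hD : D.IsHermitian) (j : ι) : Matrix ι ι 𝕜 :=
  Unitary.conjStarAlgAut 𝕜 _ hD.eigenvectorUnitary (Matrix.diagonal (Pi.single j 1))

theorem completeOrthogonalIdempotents_eigenprojection (hD : D.IsHermitian) :
    CompleteOrthogonalIdempotents (eigenprojection hD) :=
  ((CompleteOrthogonalIdempotents.single fun _ : ι => 𝕜).map (Matrix.diagonalRingHom ι 𝕜)).map
    (Unitary.conjStarAlgAut 𝕜 _ hD.eigenvectorUnitary : Matrix ι ι 𝕜 →+* Matrix ι ι 𝕜)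

theorem isHermitian_eigenprojection (hD : D.IsHermitian) (j : ι) :
    (eigenprojection hD j).IsHermitian := by
  have hdiag : (Matrix.diagonal (Pi.single j (1 : 𝕜))).IsHermitian := by
    simp [Matrix.IsHermitian, Matrix.diagonal_conjTranspose]
  exact (map_star _ _).symm.trans (congrArg _ hdiag)

theorem posSemidef_eigenprojection (hD : D.IsHermitian) (j : ι) :
    (eigenprojection hD j).PosSemidef :=
  posSemidef_of_isHermitian_of_isIdempotentElem (isHermitian_eigenprojection hD j)
    ((completeOrthogonalIdempotents_eigenprojection hD).idem j)

theorem trace_eigenprojection (hD : D.IsHermitian) (j : ι) : (eigenprojection hD j).trace = 1 := by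
  rw [eigenprojection, Unitary.conjStarAlgAut_apply, Matrix.trace_mul_cycle,
    Unitary.coe_star_mul_self, one_mul, Matrix.trace_diagonal, Fintype.sum_pi_single']

theorem sum_eigenvalues_smul_eigenprojection (hD : D.IsHermitian) :
    ∑ j, (hD.eigenvalues j : 𝕜) • eigenprojection hD j = D := by
  have hdiag : ∑ j, (hD.eigenvalues j : 𝕜) • Matrix.diagonal (Pi.single j (1 : 𝕜)) =
      Matrix.diagonal (RCLike.ofReal ∘ hD.eigenvalues) := by
    ext a b
    simp [Matrix.sum_apply, Matrix.diagonal_apply, Pi.single_apply, RCLike.real_smul_eq_coe_mul]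
  conv_rhs => rw [hD.spectral_theorem, ← hdiag]
  simp only [eigenprojection, map_sum, map_smul]

theorem re_trace_mul_eq_sum_eigenvalues (hD : D.IsHermitian) (A : Matrix ι ι 𝕜) :
    RCLike.re (A * D).trace =
      ∑ j, RCLike.re (A * eigenprojection hD j).trace * hD.eigenvalues j := by
  conv_lhs => rw [← sum_eigenvalues_smul_eigenprojection hD]
  simp [Finset.mul_sum, Matrix.trace_sum, RCLike.smul_re, mul_comm]

theorem re_trace_eq_sum_eigenprojection (hD : D.IsHermitian) (A : Matrix ι ι 𝕜) :
    RCLike.re A.trace = ∑ j, RCLike.re (A * eigenprojection hD j).trace := by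
  rw [← map_sum, ← Matrix.trace_sum, ← Finset.mul_sum,
    (completeOrthogonalIdempotents_eigenprojection hD).complete, mul_one]

theorem re_trace_eigenprojection_mul (hD : D.IsHermitian) (j : ι) :
    RCLike.re (eigenprojection hD j * D).trace = hD.eigenvalues j := by
  simp [re_trace_mul_eq_sum_eigenvalues hD,
    (completeOrthogonalIdempotents_eigenprojection hD).mul_eq, apply_ite, trace_eigenprojection]

end Eigenprojection

theorem renyiSum_eigenprojection (α : ℝ) (hD : D.IsHermitian) :
    renyiSum α D (eigenprojection hD) = ∑ j, hD.eigenvalues j ^ α := by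
  simp only [renyiSum, re_trace_eigenprojection_mul, trace_eigenprojection, RCLike.one_re,
    Real.one_rpow, div_one]

theorem renyiSum_le_sum_eigenvalues_rpow (hα : 1 ≤ α) (hD : D.PosSemidef)
    (hp : ∀ i, (p i).PosSemidef) (hsum : ∑ i, p i = 1) :
    renyiSum α D p ≤ ∑ j, hD.isHermitian.eigenvalues j ^ α := by
  let e := eigenprojection hD.isHermitian
  let w i j := RCLike.re (p i * e j).trace
  have hw (i j) : 0 ≤ w i j := (RCLike.nonneg_iff.1
    (trace_mul_nonneg_of_posSemidef (hp i) (posSemidef_eigenprojection hD.isHermitian j))).1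
  have hw_sum (j) : ∑ i, w i j = 1 := by
    rw [← map_sum, ← Matrix.trace_sum, ← Finset.sum_mul, hsum, one_mul, trace_eigenprojection,
      RCLike.one_re]
  calc renyiSum α D p
      = ∑ i, (∑ j, w i j * hD.isHermitian.eigenvalues j) ^ α / (∑ j, w i j) ^ (α - 1) :=
        Finset.sum_congr rfl fun i _ => by
          rw [re_trace_mul_eq_sum_eigenvalues hD.isHermitian,
            re_trace_eq_sum_eigenprojection hD.isHermitian (p i)]
    _ ≤ ∑ i, ∑ j, w i j * hD.isHermitian.eigenvalues j ^ α :=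
        Finset.sum_le_sum fun i _ =>
          rpow_sum_mul_div_rpow_sum_le _ hα (w i) _ (hw i) hD.eigenvalues_nonneg
    _ = ∑ j, hD.isHermitian.eigenvalues j ^ α := by
        rw [Finset.sum_comm]
        simp only [← Finset.sum_mul, hw_sum, one_mul]

/-- A finite resolution of identity: nonzero, pairwise orthogonal Hermitian projections that sum to
`1`. Idempotency, orthogonality and completeness are those of Mathlib's
`CompleteOrthogonalIdempotents`. -/
structure IsResolutionOfIdentity (p : κ → Matrix ι ι 𝕜) : Prop
    extends CompleteOrthogonalIdempotents p where
  isHermitian : ∀ i, (p i).IsHermitian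
  ne_zero : ∀ i, p i ≠ 0

namespace IsResolutionOfIdentity

theorem posSemidef (hp : IsResolutionOfIdentity p) (i : κ) : (p i).PosSemidef :=
  posSemidef_of_isHermitian_of_isIdempotentElem (hp.isHermitian i) (hp.idem i)

theorem comp_equiv {κ' : Type*} [Fintype κ'] (hp : IsResolutionOfIdentity p) (f : κ' ≃ κ) :
    IsResolutionOfIdentity (p ∘ f) where
  toCompleteOrthogonalIdempotents :=
    (CompleteOrthogonalIdempotents.equiv f).2 hp.toCompleteOrthogonalIdempotents
  isHermitian i := hp.isHermitian (f i)
  ne_zero i := hp.ne_zero (f i)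

theorem renyiSum_pos (hp : IsResolutionOfIdentity p) (hD : D.PosSemidef) (hD0 : D ≠ 0) :
    0 < renyiSum α D p := by
  have hpD (i) : 0 ≤ RCLike.re (p i * D).trace :=
    (RCLike.nonneg_iff.1 (trace_mul_nonneg_of_posSemidef (hp.posSemidef i) hD)).1
  have hp_pos (i) : 0 < RCLike.re (p i).trace :=
    re_trace_pos_of_posSemidef (hp.posSemidef i) (hp.ne_zero i)
  have hsum : 0 < ∑ i, RCLike.re (p i * D).trace := by
    rw [← map_sum, ← Matrix.trace_sum, ← Finset.sum_mul, hp.complete, one_mul]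
    exact re_trace_pos_of_posSemidef hD hD0
  obtain ⟨i, hi, hi_pos⟩ : ∃ i ∈ Finset.univ, 0 < RCLike.re (p i * D).trace :=
    Finset.exists_lt_of_sum_lt (by simpa using hsum)
  refine Finset.sum_pos' (fun i _ => div_nonneg (Real.rpow_nonneg (hpD i) _)
    (Real.rpow_nonneg (hp_pos i).le _)) ⟨i, hi, ?_⟩
  exact div_pos (Real.rpow_pos_of_pos hi_pos _) (Real.rpow_pos_of_pos (hp_pos i) _)

end IsResolutionOfIdentity

theorem isResolutionOfIdentity_iff :
    IsResolutionOfIdentity p ↔ (∀ i, (p i).IsHermitian) ∧ (∀ i, p i * p i = p i) ∧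
      (∀ i, p i ≠ 0) ∧ (∀ i j, i ≠ j → p i * p j = 0) ∧ ∑ i, p i = 1 :=
  ⟨fun hp => ⟨hp.isHermitian, hp.idem, hp.ne_zero, fun _ _ hij => hp.ortho hij, hp.complete⟩,
    fun ⟨hherm, hidem, hne, hortho, hsum⟩ => ⟨⟨⟨hidem, fun i j => hortho i j⟩, hsum⟩, hherm, hne⟩⟩

theorem isResolutionOfIdentity_eigenprojection (hD : D.IsHermitian) :
    IsResolutionOfIdentity (eigenprojection hD) where
  toCompleteOrthogonalIdempotents := completeOrthogonalIdempotents_eigenprojection hD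
  isHermitian := isHermitian_eigenprojection hD
  ne_zero j h := by simpa [h] using trace_eigenprojection hD j

/-- The set of values of `renyiSum α D` over all finite resolutions of identity, indexed by `Fin k`
for some `k`. -/
def resolutionRenyiSums (α : ℝ) (D : Matrix ι ι 𝕜) : Set ℝ :=
  {r | ∃ (k : ℕ) (p : Fin k → Matrix ι ι 𝕜), IsResolutionOfIdentity p ∧ r = renyiSum α D p}

theorem renyiSum_mem_resolutionRenyiSums (hp : IsResolutionOfIdentity p) :
    renyiSum α D p ∈ resolutionRenyiSums α D :=
  ⟨_, _, hp.comp_equiv (Fintype.equivFin κ).symm,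
    (Equiv.sum_comp (Fintype.equivFin κ).symm _).symm⟩

theorem resolutionRenyiSums_subset_Ioi_zero (hD : D.PosSemidef) (hD0 : D ≠ 0) :
    resolutionRenyiSums α D ⊆ Set.Ioi 0 := by
  rintro _ ⟨k, p, hp, rfl⟩
  exact hp.renyiSum_pos hD hD0

theorem isGreatest_resolutionRenyiSums (hα : 1 ≤ α) (hD : D.PosSemidef) :
    IsGreatest (resolutionRenyiSums α D) (∑ j, hD.isHermitian.eigenvalues j ^ α) := by
  constructor
  · rw [← renyiSum_eigenprojection]
    exact renyiSum_mem_resolutionRenyiSums (isResolutionOfIdentity_eigenprojection hD.isHermitian)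
  · rintro _ ⟨k, p, hp, rfl⟩
    exact renyiSum_le_sum_eigenvalues_rpow hα hD hp.posSemidef hp.complete

theorem isGreatest_log_resolutionRenyiSums (hα : 1 ≤ α) (hD : D.PosSemidef) (hD0 : D ≠ 0) :
    IsGreatest (Real.log '' resolutionRenyiSums α D)
      (Real.log (∑ j, hD.isHermitian.eigenvalues j ^ α)) :=
  (Real.strictMonoOn_log.monotoneOn.mono
    (resolutionRenyiSums_subset_Ioi_zero hD hD0)).map_isGreatest
    (isGreatest_resolutionRenyiSums hα hD)

theorem renyi_entropy_gt_one_resolution_variational_general (hα : 1 < α) (hD : D.PosSemidef)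
    (hD0 : D ≠ 0) :
    IsGreatest (resolutionRenyiSums α D) (∑ j, hD.isHermitian.eigenvalues j ^ α) ∧
    (1 / (α - 1)) * Real.log (∑ j, hD.isHermitian.eigenvalues j ^ α) =
      (1 / (α - 1)) * sSup (Real.log '' resolutionRenyiSums α D) :=
  ⟨isGreatest_resolutionRenyiSums hα.le hD,
    congrArg _ (isGreatest_log_resolutionRenyiSums hα.le hD hD0).csSup_eq.symm⟩

/-- Variational formula for `tr(D^α)`, `α ∈ (1,∞)`, for a density matrix `D` (`D ≥ 0`,
`tr D = 1`): `tr(D^α)` is the maximum over finite resolutions of identity `(p_1,…,p_k)` of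
`Σ_i tr(p_i D)^α / tr(p_i)^{α−1}`; consequently, the Rényi entropy
`R_α = (1/(α−1)) log tr(D^α)` equals `(1/(α−1))` times the maximum of the logs of these sums.
Here `tr(D^α)` is expressed spectrally as `Σ_i λ_i^α` over the eigenvalues `λ_i` of `D`. -/
theorem renyi_entropy_gt_one_resolution_variational {n : ℕ} {α : ℝ}
    (hα : α ∈ Set.Ioi (1 : ℝ))
    (D : Matrix (Fin n) (Fin n) ℂ) (hD : D.PosSemidef) (htr : D.trace = 1) :
    IsGreatest
      {r : ℝ | ∃ (k : ℕ) (p : Fin k → Matrix (Fin n) (Fin n) ℂ),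
        (∀ i, (p i).IsHermitian) ∧ (∀ i, p i * p i = p i) ∧ (∀ i, p i ≠ 0) ∧
        (∀ i j, i ≠ j → p i * p j = 0) ∧ (∑ i, p i = 1) ∧
        r = ∑ i, (Matrix.trace (p i * D)).re ^ α / (Matrix.trace (p i)).re ^ (α - 1)}
      (∑ i, hD.1.eigenvalues i ^ α) ∧
    (1 / (α - 1)) * Real.log (∑ i, hD.1.eigenvalues i ^ α) =
      (1 / (α - 1)) * sSup (Real.log ''
        {r : ℝ | ∃ (k : ℕ) (p : Fin k → Matrix (Fin n) (Fin n) ℂ),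
          (∀ i, (p i).IsHermitian) ∧ (∀ i, p i * p i = p i) ∧ (∀ i, p i ≠ 0) ∧
          (∀ i j, i ≠ j → p i * p j = 0) ∧ (∑ i, p i = 1) ∧
          r = ∑ i, (Matrix.trace (p i * D)).re ^ α / (Matrix.trace (p i)).re ^ (α - 1)}) := by
  have hD0 : D ≠ 0 := by
    rintro rfl
    simp at htr
  simpa only [resolutionRenyiSums, isResolutionOfIdentity_iff, renyiSum, and_assoc,
    RCLike.re_eq_complex_re] using renyi_entropy_gt_one_resolution_variational_general hα hD hD0
end

section
/- Let (X, 𝒜, μ) be a measure space with μ σ-finite, let α ∈ (1,∞), and let ρ : X → [0,∞) be measurable with ∫ ρ dμ = 1 and ∫ ρ^α dμ < ∞. Then ∫ ρ^α dμ = sup over all countable measurable partitions (A_i)_{i∈ℕ} of X into sets of finite measure of Σ_i ω(A_i)^α / μ(A_i)^{α−1}, where ω(A_i) = ∫_{A_i} ρ dμ and summands with μ(A_i) = 0 are taken to be 0. Consequently, the Rényi entropy R_α := (1/(α−1)) log ∫ ρ^α dμ equals (1/(α−1)) · sup over such partitions of log Σ_i ω(A_i)^α / μ(A_i)^{α−1}.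 -/
open MeasureTheory

/-!
By Jensen's inequality each cell satisfies `ω(A)^α / μ(A)^(α-1) = μ(A) (⨍_A ρ)^α ≤ ∫_A ρ^α`, so
`∫ ρ^α` bounds every partition sum. Conversely, if the essential oscillation of `ρ` on each cell is
at most a factor `t > 1`, as on the level sets of `⌊log_t ρ⌋` cut down to finite measure, the same
inequalities can be reversed at the cost of a factor `t^α`, which tends to `1` as `t → 1`.
-/

section

open Filter Topology

variable {X : Type*} [MeasurableSpace X] {μ : Measure X} {ρ : X → ℝ} {α : ℝ}

/-- A countable measurable partition of `X` into sets of finite measure, indexed by `ℕ`; cells are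
allowed to be empty, so that finite partitions are included. -/
structure IsFiniteMeasurePartition (μ : Measure X) (A : ℕ → Set X) : Prop where
  measurableSet : ∀ i, MeasurableSet (A i)
  pairwise_disjoint : Pairwise (Function.onFun Disjoint A)
  iUnion_eq_univ : ⋃ i, A i = Set.univ
  measure_lt_top : ∀ i, μ (A i) < ⊤

/-- The contribution `ω(s)^α / μ(s)^(α-1)` of a cell `s` to a partition sum, with `ω = ρ dμ`. For
`α ≠ 1` the convention `x / 0 = 0` makes it vanish on null sets and on sets of infinite measure. -/
noncomputable def renyiTerm (μ : Measure X) (ρ : X → ℝ) (α : ℝ) (s : Set X) : ℝ :=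
  (∫ x in s, ρ x ∂μ) ^ α / μ.real s ^ (α - 1)

/-- The values of the convergent sums `Σ_i ω(A_i)^α / μ(A_i)^(α-1)` over all countable measurable
partitions into sets of finite measure. -/
def renyiPartitionSums (μ : Measure X) (ρ : X → ℝ) (α : ℝ) : Set ℝ :=
  {r | ∃ A, IsFiniteMeasurePartition μ A ∧ HasSum (fun i => renyiTerm μ ρ α (A i)) r}

theorem renyiPartitionSums_eq_setOf_tsum (μ : Measure X) (ρ : X → ℝ) (α : ℝ) :
    renyiPartitionSums μ ρ α = {r : ℝ | ∃ A : ℕ → Set X,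
      (∀ i, MeasurableSet (A i)) ∧ Pairwise (Function.onFun Disjoint A) ∧
      (⋃ i, A i) = Set.univ ∧ (∀ i, μ (A i) < ⊤) ∧
      Summable (fun i => (∫ x in A i, ρ x ∂μ) ^ α / ((μ (A i)).toReal) ^ (α - 1)) ∧
      r = ∑' i, (∫ x in A i, ρ x ∂μ) ^ α / ((μ (A i)).toReal) ^ (α - 1)} := by
  ext r
  constructor
  · rintro ⟨A, ⟨hmeas, hdisj, hcover, hfin⟩, hsum⟩
    exact ⟨A, hmeas, hdisj, hcover, hfin, hsum.summable, hsum.tsum_eq.symm⟩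
  · rintro ⟨A, hmeas, hdisj, hcover, hfin, hsum, rfl⟩
    exact ⟨A, ⟨hmeas, hdisj, hcover, hfin⟩, hsum.hasSum⟩

theorem IsFiniteMeasurePartition.hasSum_setIntegral {A : ℕ → Set X}
    (hA : IsFiniteMeasurePartition μ A) {f : X → ℝ} (hf : Integrable f μ) :
    HasSum (fun i => ∫ x in A i, f x ∂μ) (∫ x, f x ∂μ) := by
  simpa only [hA.iUnion_eq_univ, setIntegral_univ] using
    hasSum_integral_iUnion hA.measurableSet hA.pairwise_disjoint hf.integrableOn

theorem IsFiniteMeasurePartition.ae_of_forall_ae_restrict {A : ℕ → Set X}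
    (hA : IsFiniteMeasurePartition μ A) {p : X → Prop} (hp : ∀ i, ∀ᵐ x ∂μ.restrict (A i), p x) :
    ∀ᵐ x ∂μ, p x := by
  rw [← Measure.restrict_univ (μ := μ), ← hA.iUnion_eq_univ]
  exact (ae_restrict_iUnion_iff A p).2 hp

theorem aemeasurable_of_aemeasurable_rpow (hα : α ≠ 0) (hρ_nonneg : 0 ≤ᵐ[μ] ρ)
    (hρα : AEMeasurable (fun x => ρ x ^ α) μ) : AEMeasurable ρ μ := by
  refine (hρα.pow_const α⁻¹).congr ?_
  filter_upwards [hρ_nonneg] with x hx using Real.rpow_rpow_inv hx hα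

theorem integrable_of_integrable_rpow [IsFiniteMeasure μ] (hα : 1 ≤ α) (hρ_nonneg : 0 ≤ᵐ[μ] ρ)
    (hρα : Integrable (fun x => ρ x ^ α) μ) : Integrable ρ μ := by
  have hρ_meas : AEMeasurable ρ μ :=
    aemeasurable_of_aemeasurable_rpow (by positivity) hρ_nonneg hρα.aemeasurable
  refine ((integrable_const (1 : ℝ)).add hρα).mono' hρ_meas.aestronglyMeasurable ?_
  filter_upwards [hρ_nonneg] with x hx
  rw [Real.norm_of_nonneg hx, Pi.add_apply]
  rcases le_total (ρ x) 1 with hx1 | hx1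
  · exact le_add_of_le_of_nonneg hx1 (Real.rpow_nonneg hx α)
  · exact le_add_of_nonneg_of_le zero_le_one (Real.self_le_rpow_of_one_le hx1 hα)

section Cell

variable {s : Set X}

theorem renyiTerm_nonneg (hρ_nonneg : 0 ≤ᵐ[μ.restrict s] ρ) : 0 ≤ renyiTerm μ ρ α s := by
  have hω : 0 ≤ ∫ x in s, ρ x ∂μ := integral_nonneg_of_ae hρ_nonneg
  unfold renyiTerm
  positivity

theorem renyiTerm_eq_measureReal_mul_setAverage_rpow (hα : α ≠ 1)
    (hρ_nonneg : 0 ≤ᵐ[μ.restrict s] ρ) :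
    renyiTerm μ ρ α s = μ.real s * (⨍ x in s, ρ x ∂μ) ^ α := by
  have hω : 0 ≤ ∫ x in s, ρ x ∂μ := integral_nonneg_of_ae hρ_nonneg
  rw [renyiTerm, setAverage_eq, smul_eq_mul]
  rcases (measureReal_nonneg (μ := μ) (s := s)).eq_or_lt with hs | hs
  · rw [← hs, Real.zero_rpow (sub_ne_zero.2 hα), div_zero, zero_mul]
  · rw [Real.mul_rpow (inv_nonneg.2 hs.le) hω, Real.inv_rpow hs.le, Real.rpow_sub_one hs.ne']
    field_simp

theorem renyiTerm_le_setIntegral_rpow (hα : 1 < α) (hs : μ s ≠ ⊤)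
    (hρ_nonneg : 0 ≤ᵐ[μ.restrict s] ρ) (hρα : IntegrableOn (fun x => ρ x ^ α) s μ) :
    renyiTerm μ ρ α s ≤ ∫ x in s, ρ x ^ α ∂μ := by
  rcases eq_or_ne (μ s) 0 with hs0 | hs0
  · simp [renyiTerm, Measure.restrict_eq_zero.2 hs0, Real.zero_rpow (by positivity : α ≠ 0)]
  have : IsFiniteMeasure (μ.restrict s) := isFiniteMeasure_restrict.2 hs
  have hρ : IntegrableOn ρ s μ := integrable_of_integrable_rpow hα.le hρ_nonneg hρα
  have jensen : (⨍ x in s, ρ x ∂μ) ^ α ≤ ⨍ x in s, ρ x ^ α ∂μ :=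
    (convexOn_rpow hα.le).map_set_average_le
      (Real.continuous_rpow_const (by positivity)).continuousOn isClosed_Ici hs0 hs
      hρ_nonneg hρ hρα
  calc renyiTerm μ ρ α s = μ.real s * (⨍ x in s, ρ x ∂μ) ^ α :=
        renyiTerm_eq_measureReal_mul_setAverage_rpow hα.ne' hρ_nonneg
    _ ≤ μ.real s * ⨍ x in s, ρ x ^ α ∂μ := by gcongr
    _ = ∫ x in s, ρ x ^ α ∂μ := measure_smul_setAverage _ hs

theorem ae_le_mul_setAverage {t : ℝ} (hs : μ s ≠ ⊤) (hρ : IntegrableOn ρ s μ)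
    (hosc : ∀ᵐ x ∂μ.restrict s, ∀ᵐ y ∂μ.restrict s, ρ x ≤ t * ρ y) :
    ∀ᵐ x ∂μ.restrict s, ρ x ≤ t * ⨍ y in s, ρ y ∂μ := by
  rcases eq_or_ne (μ s) 0 with hs0 | hs0
  · simp [Measure.restrict_eq_zero.2 hs0]
  filter_upwards [hosc] with x hx
  have hμs : 0 < μ.real s := ENNReal.toReal_pos hs0 hs
  have hint : μ.real s * ρ x ≤ t * ∫ y in s, ρ y ∂μ := by
    simpa [integral_const_mul] using
      setIntegral_mono_ae_restrict (f := fun _ => ρ x) (integrableOn_const hs) (hρ.const_mul t) hx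
  rw [setAverage_eq, smul_eq_mul, mul_left_comm, ← div_eq_inv_mul, le_div_iff₀' hμs]
  exact hint

theorem setIntegral_rpow_le_rpow_mul_renyiTerm {t : ℝ} (hα_pos : 0 < α) (hα : α ≠ 1)
    (ht : 0 ≤ t) (hs : μ s ≠ ⊤) (hρ_nonneg : 0 ≤ᵐ[μ.restrict s] ρ) (hρ : IntegrableOn ρ s μ)
    (hosc : ∀ᵐ x ∂μ.restrict s, ∀ᵐ y ∂μ.restrict s, ρ x ≤ t * ρ y) :
    ∫ x in s, ρ x ^ α ∂μ ≤ t ^ α * renyiTerm μ ρ α s := by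
  have havg : 0 ≤ ⨍ x in s, ρ x ∂μ := by
    rw [setAverage_eq]
    exact smul_nonneg (by positivity) (integral_nonneg_of_ae hρ_nonneg)
  calc ∫ x in s, ρ x ^ α ∂μ ≤ ∫ _ in s, (t * ⨍ y in s, ρ y ∂μ) ^ α ∂μ := by
        refine integral_mono_of_nonneg ?_ (integrableOn_const hs) ?_
        · filter_upwards [hρ_nonneg] with x hx using Real.rpow_nonneg hx α
        · filter_upwards [hρ_nonneg, ae_le_mul_setAverage hs hρ hosc] with x hx hxt
          exact Real.rpow_le_rpow hx hxt hα_pos.le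
    _ = t ^ α * (μ.real s * (⨍ y in s, ρ y ∂μ) ^ α) := by
        rw [setIntegral_const, smul_eq_mul, Real.mul_rpow ht havg, mul_left_comm]
    _ = t ^ α * renyiTerm μ ρ α s := by
        rw [renyiTerm_eq_measureReal_mul_setAverage_rpow hα hρ_nonneg]

theorem renyiTerm_pos (hs : μ s ≠ ⊤) (hρ_nonneg : 0 ≤ᵐ[μ.restrict s] ρ)
    (hρ : IntegrableOn ρ s μ) (hρ_ne : ¬ ρ =ᵐ[μ.restrict s] 0) : 0 < renyiTerm μ ρ α s := by
  have hs0 : μ s ≠ 0 := fun h => hρ_ne (by simp [Measure.restrict_eq_zero.2 h, EventuallyEq])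
  have hμs : 0 < μ.real s := ENNReal.toReal_pos hs0 hs
  have hω : 0 < ∫ x in s, ρ x ∂μ :=
    (integral_nonneg_of_ae hρ_nonneg).lt_of_ne' fun h =>
      hρ_ne ((integral_eq_zero_iff_of_nonneg_ae hρ_nonneg hρ).1 h)
  unfold renyiTerm
  positivity

end Cell

theorem exists_isFiniteMeasurePartition_const_on_cells (μ : Measure X) [SigmaFinite μ]
    {ι : Type*} [Countable ι] [MeasurableSpace ι] [MeasurableSingletonClass ι]
    {f : X → ι} (hf : Measurable f) :
    ∃ A, IsFiniteMeasurePartition μ A ∧ ∀ i, ∀ x ∈ A i, ∀ y ∈ A i, f x = f y := by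
  obtain ⟨code, hcode⟩ := Countable.exists_injective_nat (ℕ × ι)
  let label : X → ℕ × ι := fun x => (spanningSetsIndex μ x, f x)
  have hlabel : ∀ {i x y}, code (label x) = i → code (label y) = i → label x = label y :=
    fun hx hy => hcode (hx.trans hy.symm)
  have hmeas : Measurable (code ∘ label) :=
    (measurable_of_countable code).comp ((measurableSet_spanningSetsIndex μ).prodMk hf)
  refine ⟨fun i => code ∘ label ⁻¹' {i}, ⟨fun i => hmeas (measurableSet_singleton i),
    pairwise_disjoint_fiber _, ?_, fun i => ?_⟩,
    fun i x hx y hy => congrArg Prod.snd (hlabel hx hy)⟩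
  · exact Set.eq_univ_of_forall fun x => Set.mem_iUnion.2 ⟨_, rfl⟩
  · rcases (code ∘ label ⁻¹' {i}).eq_empty_or_nonempty with hempty | ⟨y, hy⟩
    · simp only [hempty, measure_empty, ENNReal.zero_lt_top]
    refine (measure_mono fun x hx => ?_).trans_lt
      (measure_spanningSets_lt_top μ (spanningSetsIndex μ y))
    have hindex : spanningSetsIndex μ x = spanningSetsIndex μ y :=
      congrArg Prod.fst (hlabel hx hy)
    exact hindex ▸ mem_spanningSetsIndex μ x

theorem le_mul_of_floor_logb_eq {t a b : ℝ} (ht : 1 < t) (ha : 0 < a) (hb : 0 < b)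
    (hab : ⌊Real.logb t a⌋ = ⌊Real.logb t b⌋) : a ≤ t * b := by
  have hlog : Real.logb t (a / b) < 1 := by
    rw [Real.logb_div ha.ne' hb.ne']
    exact (abs_lt.1 (Int.abs_sub_lt_one_of_floor_eq_floor hab)).2
  rw [Real.logb_lt_iff_lt_rpow ht (div_pos ha hb), Real.rpow_one, div_lt_iff₀ hb] at hlog
  exact hlog.le

theorem exists_isFiniteMeasurePartition_ae_le_mul [SigmaFinite μ] (hρ_meas : AEMeasurable ρ μ)
    (hρ_nonneg : 0 ≤ᵐ[μ] ρ) {t : ℝ} (ht : 1 < t) :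
    ∃ A, IsFiniteMeasurePartition μ A ∧
      ∀ i, ∀ᵐ x ∂μ.restrict (A i), ∀ᵐ y ∂μ.restrict (A i), ρ x ≤ t * ρ y := by
  let g : X → ℝ := hρ_meas.mk ρ
  have hg : Measurable g := hρ_meas.measurable_mk
  -- `Real.logb t 0 = 0`, so the zero set has to be separated from `{1 ≤ g < t}` by hand.
  have hlevel : Measurable fun x => (⌊Real.logb t (g x)⌋, g x = 0) :=
    (hg.log.div_const (Real.log t)).floor.prodMk
      (measurableSet_setOfPred.1 (hg (measurableSet_singleton 0)))
  obtain ⟨A, hA, hconst⟩ := exists_isFiniteMeasurePartition_const_on_cells μ hlevel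
  refine ⟨A, hA, fun i => ?_⟩
  have hgood : ∀ᵐ x ∂μ.restrict (A i), x ∈ A i ∧ ρ x = g x ∧ 0 ≤ ρ x := by
    filter_upwards [ae_restrict_mem (hA.measurableSet i), ae_restrict_of_ae hρ_meas.ae_eq_mk,
      ae_restrict_of_ae hρ_nonneg] with x hxA hxg hx using ⟨hxA, hxg, hx⟩
  filter_upwards [hgood] with x ⟨hxA, hxg, hx⟩
  filter_upwards [hgood] with y ⟨hyA, hyg, hy⟩
  obtain ⟨hfloor, hzero⟩ := Prod.mk.inj (hconst i x hxA y hyA)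
  rw [hxg] at hx ⊢
  rw [hyg] at hy ⊢
  rcases hx.eq_or_lt with hx0 | hx_pos
  · rw [← hx0]
    positivity
  · have hy_pos : 0 < g y := hy.lt_of_ne' fun hy0 => hx_pos.ne' (hzero.mpr hy0)
    exact le_mul_of_floor_logb_eq ht hx_pos hy_pos hfloor

theorem IsFiniteMeasurePartition.integrableOn {A : ℕ → Set X} (hA : IsFiniteMeasurePartition μ A)
    (hα : 1 ≤ α) (hρ_nonneg : 0 ≤ᵐ[μ] ρ) (hρα : Integrable (fun x => ρ x ^ α) μ) (i : ℕ) :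
    IntegrableOn ρ (A i) μ :=
  have : IsFiniteMeasure (μ.restrict (A i)) := isFiniteMeasure_restrict.2 (hA.measure_lt_top i).ne
  integrable_of_integrable_rpow hα (ae_restrict_of_ae hρ_nonneg) hρα.integrableOn

theorem IsFiniteMeasurePartition.renyiTerm_le {A : ℕ → Set X} (hA : IsFiniteMeasurePartition μ A)
    (hα : 1 < α) (hρ_nonneg : 0 ≤ᵐ[μ] ρ) (hρα : Integrable (fun x => ρ x ^ α) μ) (i : ℕ) :
    renyiTerm μ ρ α (A i) ≤ ∫ x in A i, ρ x ^ α ∂μ :=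
  renyiTerm_le_setIntegral_rpow hα (hA.measure_lt_top i).ne (ae_restrict_of_ae hρ_nonneg)
    hρα.integrableOn

theorem integral_rpow_mem_upperBounds_renyiPartitionSums (hα : 1 < α) (hρ_nonneg : 0 ≤ᵐ[μ] ρ)
    (hρα : Integrable (fun x => ρ x ^ α) μ) :
    ∫ x, ρ x ^ α ∂μ ∈ upperBounds (renyiPartitionSums μ ρ α) := by
  rintro r ⟨A, hA, hr⟩
  exact hasSum_le (hA.renyiTerm_le hα hρ_nonneg hρα) hr (hA.hasSum_setIntegral hρα)

theorem exists_mem_renyiPartitionSums_integral_rpow_le [SigmaFinite μ] (hα : 1 < α)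
    (hρ_nonneg : 0 ≤ᵐ[μ] ρ) (hρα : Integrable (fun x => ρ x ^ α) μ) {t : ℝ} (ht : 1 < t) :
    ∃ r ∈ renyiPartitionSums μ ρ α, ∫ x, ρ x ^ α ∂μ ≤ t ^ α * r := by
  have hρ_meas : AEMeasurable ρ μ :=
    aemeasurable_of_aemeasurable_rpow (by positivity) hρ_nonneg hρα.aemeasurable
  obtain ⟨A, hA, hosc⟩ := exists_isFiniteMeasurePartition_ae_le_mul hρ_meas hρ_nonneg ht
  have hsum : HasSum (fun i => ∫ x in A i, ρ x ^ α ∂μ) (∫ x, ρ x ^ α ∂μ) :=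
    hA.hasSum_setIntegral hρα
  have hterm : Summable fun i => renyiTerm μ ρ α (A i) :=
    hsum.summable.of_nonneg_of_le (fun i => renyiTerm_nonneg (ae_restrict_of_ae hρ_nonneg))
      (hA.renyiTerm_le hα hρ_nonneg hρα)
  refine ⟨_, ⟨A, hA, hterm.hasSum⟩, hasSum_le (fun i => ?_) hsum (hterm.hasSum.mul_left _)⟩
  exact setIntegral_rpow_le_rpow_mul_renyiTerm (by positivity) hα.ne' (by positivity)
    (hA.measure_lt_top i).ne (ae_restrict_of_ae hρ_nonneg)
    (hA.integrableOn hα.le hρ_nonneg hρα i) (hosc i)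

theorem isLUB_renyiPartitionSums [SigmaFinite μ] (hα : 1 < α) (hρ_nonneg : 0 ≤ᵐ[μ] ρ)
    (hρα : Integrable (fun x => ρ x ^ α) μ) :
    IsLUB (renyiPartitionSums μ ρ α) (∫ x, ρ x ^ α ∂μ) := by
  refine ⟨integral_rpow_mem_upperBounds_renyiPartitionSums hα hρ_nonneg hρα, fun b hb => ?_⟩
  have hbound : ∀ t : ℝ, 1 < t → ∫ x, ρ x ^ α ∂μ ≤ t ^ α * b := by
    intro t ht
    obtain ⟨r, hr, hle⟩ := exists_mem_renyiPartitionSums_integral_rpow_le hα hρ_nonneg hρα ht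
    exact hle.trans (mul_le_mul_of_nonneg_left (hb hr) (by positivity))
  have hlim : Tendsto (fun t : ℝ => t ^ α * b) (𝓝[>] 1) (𝓝 b) := by
    have hcont : ContinuousAt (fun t : ℝ => t ^ α * b) 1 :=
      (Real.continuousAt_rpow_const 1 α (Or.inl one_ne_zero)).mul_const b
    simpa only [Real.one_rpow, one_mul] using hcont.tendsto.mono_left nhdsWithin_le_nhds
  exact ge_of_tendsto hlim (eventually_mem_nhdsWithin.mono hbound)

theorem pos_of_mem_renyiPartitionSums (hα : 1 ≤ α) (hρ_nonneg : 0 ≤ᵐ[μ] ρ)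
    (hρ_ne : ¬ ρ =ᵐ[μ] 0) (hρα : Integrable (fun x => ρ x ^ α) μ) {r : ℝ}
    (hr : r ∈ renyiPartitionSums μ ρ α) : 0 < r := by
  obtain ⟨A, hA, hsum⟩ := hr
  obtain ⟨i, hi⟩ : ∃ i, ¬ ρ =ᵐ[μ.restrict (A i)] 0 := by
    by_contra! hzero
    exact hρ_ne (hA.ae_of_forall_ae_restrict hzero)
  have hi_pos : 0 < renyiTerm μ ρ α (A i) :=
    renyiTerm_pos (hA.measure_lt_top i).ne (ae_restrict_of_ae hρ_nonneg)
      (hA.integrableOn hα hρ_nonneg hρα i) hi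
  exact hi_pos.trans_le
    (le_hasSum hsum i fun j _ => renyiTerm_nonneg (ae_restrict_of_ae hρ_nonneg))

theorem isLUB_log_image {S : Set ℝ} {a : ℝ} (hS : ∀ r ∈ S, 0 < r) (ha : IsLUB S a) :
    IsLUB (Real.log '' S) (Real.log a) := by
  obtain ⟨r, hr⟩ := ha.nonempty
  have ha_pos : 0 < a := (hS r hr).trans_le (ha.1 hr)
  exact ha.isLUB_of_tendsto (Real.strictMonoOn_log.monotoneOn.mono hS) ⟨r, hr⟩
    (Real.continuousAt_log ha_pos.ne').continuousWithinAt

theorem renyi_gt_one_partition_variational_general [SigmaFinite μ] (hα : 1 < α)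
    (hρ_nonneg : 0 ≤ᵐ[μ] ρ) (hρ_ne : ¬ ρ =ᵐ[μ] 0) (hρα : Integrable (fun x => ρ x ^ α) μ) :
    IsLUB (renyiPartitionSums μ ρ α) (∫ x, ρ x ^ α ∂μ) ∧
    (1 / (α - 1)) * Real.log (∫ x, ρ x ^ α ∂μ) =
      (1 / (α - 1)) * sSup (Real.log '' renyiPartitionSums μ ρ α) := by
  have hlub : IsLUB (renyiPartitionSums μ ρ α) (∫ x, ρ x ^ α ∂μ) :=
    isLUB_renyiPartitionSums hα hρ_nonneg hρα
  have hlog : IsLUB (Real.log '' renyiPartitionSums μ ρ α) (Real.log (∫ x, ρ x ^ α ∂μ)) :=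
    isLUB_log_image (fun r hr => pos_of_mem_renyiPartitionSums hα.le hρ_nonneg hρ_ne hρα hr) hlub
  exact ⟨hlub, by rw [hlog.csSup_eq (hlub.nonempty.image _)]⟩

end

/-- Variational formula for `∫ ρ^α dμ`, `α ∈ (1,∞)` (commutative Rényi entropy): for σ-finite
`μ` and a density `ρ ≥ 0` with `∫ ρ dμ = 1` and `ρ^α ∈ L¹(μ)`, `∫ ρ^α dμ` is the supremum,
over countable measurable partitions `(A_i)` of `X` into sets of finite measure, of
`Σ_i ω(A_i)^α / μ(A_i)^{α−1}` with `ω(A_i) = ∫_{A_i} ρ dμ` (summands with `μ(A_i) = 0` vanish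
automatically, since then `ω(A_i) = 0` and `0 ^ α / 0 ^ (α−1) = 0`); consequently the Rényi
entropy `R_α = (1/(α−1)) log ∫ ρ^α dμ` equals `(1/(α−1))` times the supremum of the logs of
these sums. -/
theorem renyi_gt_one_partition_variational
    {X : Type*} [MeasurableSpace X] (μ : Measure X) [SigmaFinite μ] {α : ℝ}
    (hα : α ∈ Set.Ioi (1 : ℝ))
    (ρ : X → ℝ) (hρ_meas : Measurable ρ) (hρ_nonneg : ∀ x, 0 ≤ ρ x)
    (hρ_int : ∫ x, ρ x ∂μ = 1)
    (hρα_int : Integrable (fun x => ρ x ^ α) μ) :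
    IsLUB
      {r : ℝ | ∃ A : ℕ → Set X,
        (∀ i, MeasurableSet (A i)) ∧ Pairwise (Function.onFun Disjoint A) ∧
        (⋃ i, A i) = Set.univ ∧ (∀ i, μ (A i) < ⊤) ∧
        Summable (fun i => (∫ x in A i, ρ x ∂μ) ^ α / ((μ (A i)).toReal) ^ (α - 1)) ∧
        r = ∑' i, (∫ x in A i, ρ x ∂μ) ^ α / ((μ (A i)).toReal) ^ (α - 1)}
      (∫ x, ρ x ^ α ∂μ) ∧
    (1 / (α - 1)) * Real.log (∫ x, ρ x ^ α ∂μ) =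
      (1 / (α - 1)) * sSup (Real.log ''
        {r : ℝ | ∃ A : ℕ → Set X,
          (∀ i, MeasurableSet (A i)) ∧ Pairwise (Function.onFun Disjoint A) ∧
          (⋃ i, A i) = Set.univ ∧ (∀ i, μ (A i) < ⊤) ∧
          Summable (fun i => (∫ x in A i, ρ x ∂μ) ^ α / ((μ (A i)).toReal) ^ (α - 1)) ∧
          r = ∑' i, (∫ x in A i, ρ x ∂μ) ^ α / ((μ (A i)).toReal) ^ (α - 1)}) := by
  have hρ_ne : ¬ ρ =ᵐ[μ] 0 := fun h => zero_ne_one ((integral_eq_zero_of_ae h).symm.trans hρ_int)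
  simpa only [renyiPartitionSums_eq_setOf_tsum] using
    renyi_gt_one_partition_variational_general hα (ae_of_all μ hρ_nonneg) hρ_ne hρα_int
end
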